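/- Let e = xy be a non-pendant edge of a tree T with ecc(x) ≥ ecc(y), and let T' be the tree obtained by subdividing e with a new vertex r. Let a be the eccentricity of x in the connected component of T − y containing x. Then π_t(T',r) = π_t(T,x) + 2^a. -/

import Mathlib

open SimpleGraph

/-- A single pebbling step: remove two pebbles from `u`, add one to a neighbor `v`. -/
def PebStep {V : Type} (G : SimpleGraph V) (C C' : V → ℕ) : Prop :=
  ∃ u v : V, G.Adj u v ∧ 2 ≤ C u ∧
    C' u + 2 = C u ∧ C' v = C v + 1 ∧ ∀ w, w ≠ u → w ≠ v → C' w = C w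

/-- `C` is `t`-fold `r`-solvable. -/
def TSolvable {V : Type} (G : SimpleGraph V) (C : V → ℕ) (r : V) (t : ℕ) : Prop :=
  ∃ C', Relation.ReflTransGen (PebStep G) C C' ∧ t ≤ C' r

/-- The `t`-pebbling number of `G` rooted at `r`. -/
noncomputable def piT {V : Type} (G : SimpleGraph V) (r : V) (t : ℕ) : ℕ :=
  sInf {s | ∀ C : V → ℕ, s ≤ ∑ᶠ v, C v → TSolvable G C r t}

/-- The pebbling number of `G` rooted at `r`. -/
noncomputable def pin {V : Type} (G : SimpleGraph V) (r : V) : ℕ := piT G r 1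

/-- The `t`-pebbling number of `G`. -/
noncomputable def piGt {V : Type} (G : SimpleGraph V) (t : ℕ) : ℕ := ⨆ r, piT G r t

/-- The pebbling number of `G`. -/
noncomputable def piG {V : Type} (G : SimpleGraph V) : ℕ := ⨆ r, pin G r

/-- Eccentricity of `r`. -/
noncomputable def eccG {V : Type} (G : SimpleGraph V) (r : V) : ℕ := ⨆ v, G.dist r v

/-- Diameter of `G`. -/
noncomputable def diamG {V : Type} (G : SimpleGraph V) : ℕ := ⨆ u, eccG G u

/-!
Root a tree at `r` and let the height `h v` of a vertex be the largest distance from `v` to one of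
its descendants. Giving a pebble on `v` the weight `2 ^ h v`, the configurations that cannot bring
`t` pebbles to `r` have weight at most `(t - 1) * 2 ^ h r + ∑ v ≠ r, 2 ^ h v`: a move of two pebbles
to the parent does not lose weight, and when no such move is left, the non-root vertices carry at
most one pebble each. This bound is attained by a configuration on the leaves, obtained from the one
with `t - 1` pebbles on `r` and one on every other vertex by splitting pebbles down to the leaves
along longest branches. Hence `π_t(T, r)` exceeds the bound by exactly one, in place of the maximum
path partition formula.

Rooting `T'` at the new vertex, which inherits the height of `x`, changes no height except that of
`x`, which becomes the eccentricity `a` of `x` in its component of `T - y`. So the sum gains the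
single term `2 ^ a`.
-/

/-- `p` and `h` present `G` as a tree rooted at `r`: every `v ≠ r` has parent `p v`, and `h v` is
the largest distance from `v` to one of its descendants. The value `p r` is arbitrary. -/
structure IsRootedBy {V : Type*} (G : SimpleGraph V) (r : V) (p : V → V) (h : V → ℕ) : Prop where
  adj_iff : ∀ u v, G.Adj u v ↔ (u ≠ r ∧ p u = v) ∨ (v ≠ r ∧ p v = u)
  height_lt : ∀ v ≠ r, h v < h (p v)
  exists_child : ∀ v, 0 < h v → ∃ c ≠ r, p c = v ∧ h c + 1 = h v

lemma exists_eq_add_single_of_le {V : Type*} [DecidableEq V] {C : V → ℕ} {u : V} {k : ℕ}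
    (hk : k ≤ C u) : ∃ D : V → ℕ, C = D + Pi.single u k := by
  refine ⟨C - Pi.single u k, (tsub_add_cancel_of_le fun v => ?_).symm⟩
  obtain rfl | hv := eq_or_ne v u <;> simp [*]

/-- The largest configuration that has at most `q` pebbles on `r` and at most one pebble on every
other vertex, where no further move towards the root `r` is possible. -/
def stuckConfig {V : Type*} [DecidableEq V] (r : V) (q : ℕ) : V → ℕ := Function.update 1 r q

lemma stuckConfig_le_one {V : Type*} [DecidableEq V] {r : V} (q : ℕ) :
    ∀ v ≠ r, stuckConfig r q v ≤ 1 := fun v hv => by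
  simp [stuckConfig, hv]

section Flow

variable {V : Type*} [Fintype V] [DecidableEq V] {p : V → V} {r : V} {B C D : V → ℕ}

/-- The number of pebbles that `v` receives when every vertex `c` sends `n c` pebbles to `p c`. -/
def inflow (p : V → V) (n : V → ℕ) (v : V) : ℕ := ∑ c with p c = v, n c

lemma inflow_zero (p : V → V) : inflow p 0 = 0 := by
  ext v
  simp [inflow]

lemma inflow_add (p : V → V) (m n : V → ℕ) : inflow p (m + n) = inflow p m + inflow p n := by
  ext v
  simp [inflow, Finset.sum_add_distrib]

lemma inflow_single (p : V → V) (u : V) (k : ℕ) :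
    inflow p (Pi.single u k) = Pi.single (p u) k := by
  ext v
  simp [inflow, Pi.single_apply, eq_comm]

/-- A certificate that moving pebbles of `C` towards the root `r` cannot bring more than `B r`
pebbles there: if each `v` sends `n v` pebbles to its parent, at the price of two pebbles each, then
at most `B v` pebbles remain on `v`. -/
def FlowsInto (p : V → V) (r : V) (C B : V → ℕ) : Prop :=
  ∃ n : V → ℕ, n r = 0 ∧ C + inflow p n ≤ B + 2 * n

namespace FlowsInto

lemma of_le (h : C ≤ B) : FlowsInto p r C B :=
  ⟨0, rfl, by simpa [inflow_zero] using h⟩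

lemma mono (hD : FlowsInto p r D B) (h : C ≤ D) : FlowsInto p r C B := by
  obtain ⟨n, hr, hn⟩ := hD
  exact ⟨n, hr, (add_le_add_left h _).trans hn⟩

lemma apply_root_le (hC : FlowsInto p r C B) : C r ≤ B r := by
  obtain ⟨n, hr, hn⟩ := hC
  have := hn r
  simp only [Pi.add_apply, Pi.mul_apply, hr] at this
  lia

/-- The flow `n` for one configuration becomes the flow `n + 1_u` for the other. -/
lemma add_single_iff {u : V} (hu : u ≠ r) (hB : B u ≤ 1) :
    FlowsInto p r (D + Pi.single u 2) B ↔ FlowsInto p r (D + Pi.single (p u) 1) B := by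
  have key (m : V → ℕ) : D + Pi.single u 2 + inflow p (m + Pi.single u 1) ≤
        B + 2 * (m + Pi.single u 1) ↔ D + Pi.single (p u) 1 + inflow p m ≤ B + 2 * m := by
    have two_single : 2 * Pi.single u 1 = (Pi.single u 2 : V → ℕ) := by
      ext w; simp [Pi.single_apply]
    rw [inflow_add, inflow_single, mul_add, two_single, ← add_assoc B,
      ← add_le_add_iff_right (Pi.single u 2 : V → ℕ) (b := D + Pi.single (p u) 1 + inflow p m)]
    abel_nf
  constructor
  · rintro ⟨n, hr, hn⟩
    have hpos : 1 ≤ n u := by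
      have := hn u
      simp only [Pi.add_apply, Pi.single_eq_same, Pi.mul_apply, Pi.ofNat_apply] at this
      lia
    obtain ⟨m, rfl⟩ := exists_eq_add_single_of_le hpos
    exact ⟨m, by simpa [hu.symm] using hr, (key m).1 hn⟩
  · rintro ⟨n, hr, hn⟩
    exact ⟨n + Pi.single u 1, by simp [hr, hu.symm], (key n).2 hn⟩

end FlowsInto

end Flow

section Weight

open scoped Matrix

variable {V : Type*} [Fintype V] {r : V} {p : V → V} {h B C D : V → ℕ}

/-- The weight of a configuration, where a pebble on a vertex of height `k` weighs `2 ^ k`: what it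
costs in pebbles to supply `C` from the leaves below. -/
def pebbleWeight (h C : V → ℕ) : ℕ := C ⬝ᵥ fun v => 2 ^ h v

lemma sum_le_pebbleWeight (h C : V → ℕ) : ∑ v, C v ≤ pebbleWeight h C :=
  Finset.sum_le_sum fun _ _ => Nat.le_mul_of_pos_right _ (by positivity)

lemma pebbleWeight_mono (h : V → ℕ) (hCD : C ≤ D) : pebbleWeight h C ≤ pebbleWeight h D :=
  Finset.sum_le_sum fun v _ => Nat.mul_le_mul_right _ (hCD v)

variable [DecidableEq V]

lemma pebbleWeight_add_single (h D : V → ℕ) (u : V) (k : ℕ) :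
    pebbleWeight h (D + Pi.single u k) = pebbleWeight h D + k * 2 ^ h u := by
  simp [pebbleWeight, add_dotProduct]

lemma sum_add_single (D : V → ℕ) (u : V) (k : ℕ) :
    ∑ v, (D + Pi.single u k : V → ℕ) v = ∑ v, D v + k := by
  simp [Finset.sum_add_distrib]

lemma pebbleWeight_stuckConfig (h : V → ℕ) (r : V) (q : ℕ) :
    pebbleWeight h (stuckConfig r q) = q * 2 ^ h r + ∑ v ∈ {r}ᶜ, 2 ^ h v := by
  rw [pebbleWeight, dotProduct, Fintype.sum_eq_add_sum_compl r, stuckConfig, Function.update_self]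
  congr 1
  refine Finset.sum_congr rfl fun v hv => ?_
  simp [Function.update_of_ne (by simpa using hv : v ≠ r)]

/-- Pebbles are repeatedly split and handed to a child of maximal height, until they all lie on
leaves. -/
lemma IsRootedBy.exists_flowsInto_sum_eq {G : SimpleGraph V} (H : IsRootedBy G r p h)
    (hB : ∀ v ≠ r, B v ≤ 1) (hC : FlowsInto p r C B) :
    ∃ C', FlowsInto p r C' B ∧ ∑ v, C' v = pebbleWeight h C := by
  induction hk : pebbleWeight h C - ∑ v, C v using Nat.strong_induction_on generalizing C with
  | _ k ih =>
  by_cases hleaf : ∀ v, 0 < h v → C v = 0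
  · refine ⟨C, hC, Finset.sum_congr rfl fun v _ => ?_⟩
    rcases Nat.eq_zero_or_pos (h v) with h0 | h0 <;> simp [h0, hleaf]
  push Not at hleaf
  obtain ⟨v, hv, hCv⟩ := hleaf
  obtain ⟨c, hc, rfl, hcv⟩ := H.exists_child v hv
  obtain ⟨D, rfl⟩ := exists_eq_add_single_of_le (Nat.one_le_iff_ne_zero.2 hCv)
  have hweight : pebbleWeight h (D + Pi.single c 2) = pebbleWeight h (D + Pi.single (p c) 1) := by
    rw [pebbleWeight_add_single, pebbleWeight_add_single, ← hcv, pow_succ, one_mul, mul_comm 2]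
  have hle := sum_le_pebbleWeight h (D + Pi.single c 2)
  rw [← hweight] at hk ⊢
  rw [sum_add_single] at hk hle
  refine ih _ ?_ ((FlowsInto.add_single_iff hc (hB c hc)).2 hC) rfl
  rw [sum_add_single]
  lia

end Weight

section Pebbling

variable {V : Type} {G : SimpleGraph V} {r : V} {p : V → V} {h B C C' D : V → ℕ}

lemma PebStep.add_single [DecidableEq V] {u v : V} (huv : G.Adj u v) :
    PebStep G (D + Pi.single u 2) (D + Pi.single v 1) :=
  ⟨u, v, huv, by simp, by simp [huv.ne], by simp [huv.ne'], fun w hu hv => by simp [hu, hv]⟩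

lemma PebStep.exists_eq_add_single [DecidableEq V] (hC : PebStep G C C') :
    ∃ (D : V → ℕ) (u v : V), G.Adj u v ∧ C = D + Pi.single u 2 ∧ C' = D + Pi.single v 1 := by
  obtain ⟨u, v, huv, hu, hCu, hCv, hCw⟩ := hC
  obtain ⟨D, rfl⟩ := exists_eq_add_single_of_le hu
  refine ⟨D, u, v, huv, rfl, funext fun w => ?_⟩
  obtain rfl | hwu := eq_or_ne w u
  · simpa [huv.ne] using hCu
  obtain rfl | hwv := eq_or_ne w v
  · simpa [huv.ne'] using hCv
  · simpa [hwu, hwv] using hCw w hwu hwv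

namespace IsRootedBy

variable [Fintype V] [DecidableEq V]

lemma flowsInto_of_pebStep (H : IsRootedBy G r p h) (hB : ∀ v ≠ r, B v ≤ 1)
    (hstep : PebStep G C C') (hC : FlowsInto p r C B) : FlowsInto p r C' B := by
  obtain ⟨D, u, v, huv, rfl, rfl⟩ := hstep.exists_eq_add_single
  rcases (H.adj_iff u v).1 huv with ⟨hu, rfl⟩ | ⟨hv, rfl⟩
  · exact (FlowsInto.add_single_iff hu (hB u hu)).1 hC
  · -- Dropping a pebble of `u`, undoing a move from `v` to `u` and dropping a pebble of `v` has
    -- the same effect as the move from `u` down to its child `v`.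
    have hsplit : FlowsInto p r (D + Pi.single v 2) B :=
      (FlowsInto.add_single_iff hv (hB v hv)).2
        (hC.mono (add_le_add_right (Pi.single_mono _ one_le_two) D))
    exact hsplit.mono (add_le_add_right (Pi.single_mono _ one_le_two) D)

lemma apply_root_le_of_flowsInto (H : IsRootedBy G r p h) (hB : ∀ v ≠ r, B v ≤ 1)
    (hsteps : Relation.ReflTransGen (PebStep G) C C') (hC : FlowsInto p r C B) :
    C' r ≤ B r := by
  refine FlowsInto.apply_root_le (p := p) ?_
  induction hsteps with
  | refl => exact hC
  | tail _ hstep ih => exact H.flowsInto_of_pebStep hB hstep ih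

/-- Greedy moves towards the root never lose weight. -/
lemma tSolvable_of_lt (H : IsRootedBy G r p h) {q : ℕ}
    (hC : pebbleWeight h (stuckConfig r q) < pebbleWeight h C) :
    TSolvable G C r (q + 1) := by
  induction hk : ∑ v, C v using Nat.strong_induction_on generalizing C with
  | _ k ih =>
  by_cases hmax : C ≤ stuckConfig r q
  · exact absurd (pebbleWeight_mono h hmax) hC.not_ge
  rw [stuckConfig, le_update_iff] at hmax
  by_cases hmove : ∀ v ≠ r, C v ≤ 1
  · exact ⟨C, .refl, not_le.1 fun hr => hmax ⟨hr, hmove⟩⟩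
  push Not at hmove
  obtain ⟨v, hv, hCv⟩ := hmove
  obtain ⟨D, rfl⟩ := exists_eq_add_single_of_le hCv
  have hweight : pebbleWeight h (D + Pi.single v 2) ≤ pebbleWeight h (D + Pi.single (p v) 1) := by
    rw [pebbleWeight_add_single, pebbleWeight_add_single, one_mul, ← pow_succ']
    gcongr
    exacts [one_le_two, H.height_lt v hv]
  rw [sum_add_single] at hk
  obtain ⟨E, hE, hEr⟩ := ih (∑ v, D v + 1) (by lia) (hC.trans_le hweight) (sum_add_single ..)
  exact ⟨E, .head (.add_single ((H.adj_iff v (p v)).2 (.inl ⟨hv, rfl⟩))) hE, hEr⟩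

theorem piT_succ (H : IsRootedBy G r p h) (q : ℕ) :
    piT G r (q + 1) = pebbleWeight h (stuckConfig r q) + 1 := by
  have hmem : pebbleWeight h (stuckConfig r q) + 1 ∈
      {s | ∀ C : V → ℕ, s ≤ ∑ᶠ v, C v → TSolvable G C r (q + 1)} := fun C hC =>
    H.tSolvable_of_lt <| (finsum_eq_sum_of_fintype C ▸ hC).trans (sum_le_pebbleWeight h C)
  refine le_antisymm (Nat.sInf_le hmem) (le_csInf ⟨_, hmem⟩ fun s hs => ?_)
  by_contra! hlt
  obtain ⟨C, hC, hsum⟩ := H.exists_flowsInto_sum_eq (stuckConfig_le_one q) (.of_le le_rfl)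
  obtain ⟨C', hsteps, hr⟩ := hs C (by rw [finsum_eq_sum_of_fintype]; lia)
  have := H.apply_root_le_of_flowsInto (stuckConfig_le_one q) hsteps hC
  rw [stuckConfig, Function.update_self] at this
  lia

end IsRootedBy

end Pebbling

section Subdivision

variable {V : Type*} {T : SimpleGraph V} {x y : V} {T' : SimpleGraph (Option V)} {p : V → V}
  {h : V → ℕ} {a : ℕ}

/-- `T'` arises from `T` by subdividing the edge `xy` with the new vertex `none`. -/
structure IsEdgeSubdivision (T : SimpleGraph V) (x y : V) (T' : SimpleGraph (Option V)) :
    Prop where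
  adj_some_some : ∀ u v, T'.Adj (some u) (some v) ↔
    T.Adj u v ∧ ¬(u = x ∧ v = y) ∧ ¬(u = y ∧ v = x)
  adj_none_some : ∀ u, T'.Adj none (some u) ↔ u = x ∨ u = y

lemma IsRootedBy.parent_eq_root (H : IsRootedBy T x p h) (hy : T.Adj x y) : p y = x :=
  ((H.adj_iff x y).1 hy).elim (fun h => absurd rfl h.1) And.right

variable [DecidableEq V]

/-- The parent function obtained from `p` by subdividing the edge `xy` and rooting at the new
vertex. -/
def subdivisionParent (p : V → V) (x y : V) (v : Option V) : Option V :=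
  v.bind fun u => if u = x ∨ u = y then none else some (p u)

/-- The heights after subdividing the edge between the root `x` and a child `y` and rooting at the
new vertex: the latter inherits the height of `x`, while `x`, which has lost its child `y`, gets
height `a`. -/
def subdivisionHeight (h : V → ℕ) (x : V) (a : ℕ) (v : Option V) : ℕ :=
  v.elim (h x) (Function.update h x a)

namespace IsRootedBy

lemma adj_iff_subdivisionParent (H : IsRootedBy T x p h) (hxy : T.Adj x y)
    (hT' : IsEdgeSubdivision T x y T') (u v : Option V) :
    T'.Adj u v ↔ (u ≠ none ∧ subdivisionParent p x y u = v) ∨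
      (v ≠ none ∧ subdivisionParent p x y v = u) := by
  have hne := hxy.ne
  have hpy := H.parent_eq_root hxy
  cases u <;> cases v
  · simp
  · simp [subdivisionParent, hT'.adj_none_some, or_iff_not_imp_left]
  · simp [subdivisionParent, T'.adj_comm (some _), hT'.adj_none_some, or_iff_not_imp_left]
  · simp only [subdivisionParent, hT'.adj_some_some, H.adj_iff, Option.bind_some]
    grind

lemma subdivision (H : IsRootedBy T x p h) (hxy : T.Adj x y) (hT' : IsEdgeSubdivision T x y T')
    (hx : h x = h y + 1) (ha : a ≤ h y) (h_lt : ∀ c ≠ y, T.Adj x c → h c < a)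
    (h_child : 0 < a → ∃ c ≠ y, T.Adj x c ∧ h c + 1 = a) :
    IsRootedBy T' none (subdivisionParent p x y) (subdivisionHeight h x a) where
  adj_iff := H.adj_iff_subdivisionParent hxy hT'
  height_lt := by
    rintro (_ | v) hv
    · exact absurd rfl hv
    obtain rfl | hvx := eq_or_ne v x
    · simpa [subdivisionParent, subdivisionHeight] using by lia
    obtain rfl | hvy := eq_or_ne v y
    · simp [subdivisionParent, subdivisionHeight, hx, hvx]
    obtain hpv | hpv := eq_or_ne (p v) x
    · simpa [subdivisionParent, subdivisionHeight, hvx, hvy, hpv] using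
        h_lt v hvy ((H.adj_iff x v).2 (.inr ⟨hvx, hpv⟩))
    · simpa [subdivisionParent, subdivisionHeight, hvx, hvy, hpv] using H.height_lt v hvx
  exists_child := by
    rintro (_ | v) hv
    · exact ⟨some y, by simp [subdivisionParent, subdivisionHeight, hx, hxy.ne']⟩
    obtain rfl | hvx := eq_or_ne v x
    · obtain ⟨c, hcy, hvc, hca⟩ := h_child (by simpa [subdivisionHeight] using hv)
      exact ⟨some c, by simp [subdivisionParent, subdivisionHeight, hcy, hvc.ne', hca,
        H.parent_eq_root hvc]⟩
    · obtain ⟨c, hcx, rfl, hc⟩ := H.exists_child v (by simpa [subdivisionHeight, hvx] using hv)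
      have hcy : c ≠ y := by
        rintro rfl
        exact hvx (H.parent_eq_root hxy)
      exact ⟨some c, by simp [subdivisionParent, subdivisionHeight, hcx, hcy, hvx, hc]⟩

end IsRootedBy

lemma pebbleWeight_subdivisionHeight [Fintype V] (h : V → ℕ) (x : V) (a q : ℕ) :
    pebbleWeight (subdivisionHeight h x a) (stuckConfig none q) =
      pebbleWeight h (stuckConfig x q) + 2 ^ a := by
  have hsum : ∑ v, 2 ^ Function.update h x a v = 2 ^ a + ∑ v ∈ {x}ᶜ, 2 ^ h v := by
    rw [Fintype.sum_eq_add_sum_compl x, Function.update_self]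
    congr 1
    refine Finset.sum_congr rfl fun v hv => ?_
    rw [Function.update_of_ne (by simpa using hv)]
  have hcompl : ({none}ᶜ : Finset (Option V)) = Finset.univ.map .some := by
    ext (_ | v) <;> simp
  rw [pebbleWeight_stuckConfig, pebbleWeight_stuckConfig, hcompl, Finset.sum_map]
  simp only [subdivisionHeight, Option.elim_none, Function.Embedding.some_apply,
    Option.elim_some, hsum]
  ring

end Subdivision

section TreeDistance

variable {V : Type*} {T : SimpleGraph V} {r u v w x y : V}

lemma exists_adj_dist_add_one_eq (hT : T.Connected) (hvw : v ≠ w) :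
    ∃ c, T.Adj v c ∧ T.dist c w + 1 = T.dist v w := by
  obtain ⟨q, hq⟩ := hT.exists_walk_length_eq_dist v w
  cases q with
  | nil => exact absurd rfl hvw
  | @cons _ c _ hvc q =>
    have hle := T.dist_le q
    have htri := hT.dist_triangle (u := v) (v := c) (w := w)
    rw [dist_eq_one_iff_adj.2 hvc] at htri
    rw [Walk.length_cons] at hq
    exact ⟨c, hvc, by lia⟩

lemma eq_of_adj_of_dist_add_one_eq (hT : T.IsTree) (hu : T.Adj v u) (hw : T.Adj v w)
    (hdu : T.dist u r + 1 = T.dist v r) (hdw : T.dist w r + 1 = T.dist v r) : u = w := by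
  obtain ⟨p, hp⟩ := hT.connected.exists_walk_length_eq_dist u r
  obtain ⟨q, hq⟩ := hT.connected.exists_walk_length_eq_dist w r
  have hp' : (Walk.cons hu p).IsPath := Walk.isPath_of_length_eq_dist _ (by simp [hp, hdu])
  have hq' : (Walk.cons hw q).IsPath := Walk.isPath_of_length_eq_dist _ (by simp [hq, hdw])
  simpa using congrArg Walk.snd ((hT.existsUnique_path v r).unique hp' hq')

lemma dist_eq_dist_add_one_or (hT : T.IsTree) (hxy : T.Adj x y) (w : V) :
    T.dist x w = T.dist y w + 1 ∨ T.dist y w = T.dist x w + 1 := by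
  simpa only [T.dist_comm (u := w)] using hT.dist_eq_dist_add_one_of_adj w hxy

/-- The largest distance from `v` to a descendant of `v` in the tree `T` rooted at `r`; the
descendants of `v` are the vertices `w` for which `v` lies on a shortest path from `r` to `w`. -/
noncomputable def treeHeight (T : SimpleGraph V) (r v : V) : ℕ :=
  ⨆ w : {w // T.dist r w = T.dist r v + T.dist v w}, T.dist v w

variable [Finite V]

lemma dist_le_treeHeight (h : T.dist r w = T.dist r v + T.dist v w) :
    T.dist v w ≤ treeHeight T r v :=
  Finite.le_ciSup (fun w : {w // T.dist r w = T.dist r v + T.dist v w} => T.dist v w) ⟨w, h⟩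

lemma exists_dist_eq_treeHeight (T : SimpleGraph V) (r v : V) :
    ∃ w, T.dist r w = T.dist r v + T.dist v w ∧ T.dist v w = treeHeight T r v := by
  have : Nonempty {w // T.dist r w = T.dist r v + T.dist v w} := ⟨v, by simp⟩
  obtain ⟨⟨w, hw⟩, hmax⟩ := exists_eq_ciSup_of_finite
    (f := fun w : {w // T.dist r w = T.dist r v + T.dist v w} => T.dist v w)
  exact ⟨w, hw, hmax⟩

lemma treeHeight_lt_of_adj (hT : T.Connected) (huv : T.Adj u v)
    (hd : T.dist r v = T.dist r u + 1) : treeHeight T r v < treeHeight T r u := by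
  obtain ⟨w, hw, hmax⟩ := exists_dist_eq_treeHeight T r v
  have huw := hT.dist_triangle (u := u) (v := v) (w := w)
  rw [dist_eq_one_iff_adj.2 huv] at huw
  have hrw := hT.dist_triangle (u := r) (v := u) (w := w)
  have := dist_le_treeHeight (T := T) (r := r) (v := u) (w := w) (by lia)
  lia

lemma exists_adj_treeHeight_add_one_eq (hT : T.Connected) (hv : 0 < treeHeight T r v) :
    ∃ c, T.Adj v c ∧ T.dist r c = T.dist r v + 1 ∧ treeHeight T r c + 1 = treeHeight T r v := by
  obtain ⟨w, hw, hmax⟩ := exists_dist_eq_treeHeight T r v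
  have hvw : v ≠ w := by
    rintro rfl
    simp [← hmax] at hv
  obtain ⟨c, hvc, hcw⟩ := exists_adj_dist_add_one_eq hT hvw
  have hrw := hT.dist_triangle (u := r) (v := c) (w := w)
  have hrc := hT.dist_triangle (u := r) (v := v) (w := c)
  rw [dist_eq_one_iff_adj.2 hvc] at hrc
  have hd : T.dist r c = T.dist r v + 1 := by lia
  have hlt := treeHeight_lt_of_adj hT hvc hd
  have hle := dist_le_treeHeight (T := T) (r := r) (v := c) (w := w) (by lia)
  exact ⟨c, hvc, hd, by lia⟩

theorem exists_isRootedBy_treeHeight (hT : T.IsTree) (r : V) :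
    ∃ p, IsRootedBy T r p (treeHeight T r) := by
  have hparent (v : V) : ∃ u, v ≠ r → T.Adj v u ∧ T.dist u r + 1 = T.dist v r := by
    obtain rfl | hv := eq_or_ne v r
    · exact ⟨v, fun h => absurd rfl h⟩
    · exact (exists_adj_dist_add_one_eq hT.connected hv).imp fun _ h _ => h
  choose p hp using hparent
  have parent_eq {u v : V} (huv : T.Adj v u) (hd : T.dist v r = T.dist u r + 1) :
      v ≠ r ∧ p v = u := by
    have hv : v ≠ r := by
      rintro rfl
      simp at hd
    exact ⟨hv, eq_of_adj_of_dist_add_one_eq hT (hp v hv).1 huv (hp v hv).2 hd.symm⟩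
  refine ⟨p, ⟨fun u v => ⟨fun huv => ?_, ?_⟩, fun v hv => ?_, fun v hv => ?_⟩⟩
  · exact (dist_eq_dist_add_one_or hT huv r).imp (parent_eq huv) (parent_eq huv.symm)
  · rintro (⟨hu, rfl⟩ | ⟨hv, rfl⟩)
    exacts [(hp u hu).1, (hp v hv).1.symm]
  · obtain ⟨hadj, hd⟩ := hp v hv
    exact treeHeight_lt_of_adj hT.connected hadj.symm (by rw [T.dist_comm, ← hd, T.dist_comm])
  · obtain ⟨c, hvc, hd, hc⟩ := exists_adj_treeHeight_add_one_eq hT.connected hv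
    obtain ⟨hcr, hpc⟩ := parent_eq hvc.symm (by rw [T.dist_comm, hd, T.dist_comm])
    exact ⟨c, hcr, hpc, hc⟩

end TreeDistance

section Edge

variable {V : Type*} {T : SimpleGraph V} {c u x y : V}

lemma dist_eq_two_of_adj_adj (hT : T.IsTree) (hxy : T.Adj x y) (hxc : T.Adj x c) (hcy : c ≠ y) :
    T.dist y c = 2 := by
  have hxc1 := dist_eq_one_iff_adj.2 hxc
  have hpos := hT.connected.pos_dist_of_ne hcy.symm
  have := dist_eq_dist_add_one_or hT hxy c
  lia

/-- In the tree rooted at `x` as well as in the one rooted at `y`, the descendants of `c` are the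
vertices beyond the edge `xc`. -/
lemma treeHeight_eq_of_adj_adj (hT : T.IsTree) (hxy : T.Adj x y) (hxc : T.Adj x c) (hcy : c ≠ y) :
    treeHeight T x c = treeHeight T y c := by
  have hxc1 := dist_eq_one_iff_adj.2 hxc
  have hyc := dist_eq_two_of_adj_adj hT hxy hxc hcy
  have hdesc (w : V) : T.dist x w = T.dist x c + T.dist c w ↔
      T.dist y w = T.dist y c + T.dist c w := by
    have hside := dist_eq_dist_add_one_or hT hxy w
    have htri := hT.connected.dist_triangle (u := x) (v := c) (w := w)
    constructor
    · intro hw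
      have : T.dist x w ≠ T.dist y w + 1 := fun hyw =>
        hcy (eq_of_adj_of_dist_add_one_eq hT hxc hxy (by lia) hyw.symm)
      lia
    · lia
  exact (Equiv.subtypeEquivRight hdesc).iSup_congr fun _ => rfl

lemma treeHeight_self (T : SimpleGraph V) (x : V) : treeHeight T x x = ⨆ w, T.dist x w :=
  (Equiv.subtypeUnivEquiv fun w => by simp).iSup_congr fun _ => rfl

lemma treeHeight_self_eq_max [Finite V] (hT : T.IsTree) (hxy : T.Adj x y) :
    treeHeight T x x = max (treeHeight T x y + 1) (treeHeight T y x) := by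
  have hxy1 := dist_eq_one_iff_adj.2 hxy
  have hyx1 := dist_eq_one_iff_adj.2 hxy.symm
  have le_self (w : V) : T.dist x w ≤ treeHeight T x x := dist_le_treeHeight (by simp)
  apply le_antisymm
  · obtain ⟨w, -, hw⟩ := exists_dist_eq_treeHeight T x x
    rcases dist_eq_dist_add_one_or hT hxy w with h | h
    · have := dist_le_treeHeight (T := T) (r := x) (v := y) (w := w) (by lia)
      lia
    · have := dist_le_treeHeight (T := T) (r := y) (v := x) (w := w) (by lia)
      lia
  · obtain ⟨w, hw, hwy⟩ := exists_dist_eq_treeHeight T x y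
    obtain ⟨z, -, hzx⟩ := exists_dist_eq_treeHeight T y x
    have := le_self w
    have := le_self z
    lia

/-- A shortest path from `x` to `u` that passed through `y` would make `u` closer to `y`. -/
lemma dist_induce_eq_of_dist_eq_add (hT : T.Connected) (hxy : T.Adj x y) {u : {w | w ≠ y}}
    (hu : T.dist y u = T.dist y x + T.dist x u) :
    (T.induce {w | w ≠ y}).dist ⟨x, hxy.ne⟩ u = T.dist x u := by
  obtain ⟨q, hq⟩ := hT.exists_walk_length_eq_dist x u
  have hyq : ∀ w ∈ q.support, w ≠ y := by
    classical
    rintro w hw rfl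
    have := congrArg Walk.length (q.take_spec hw)
    rw [Walk.length_append, hq] at this
    have := T.dist_le (q.dropUntil w hw)
    have := hT.pos_dist_of_ne hxy.ne'
    lia
  obtain ⟨q', hq'⟩ : ∃ q' : (T.induce {w | w ≠ y}).Walk ⟨x, hxy.ne⟩ u,
      q'.length = T.dist x u := by
    refine ⟨q.induce {w | w ≠ y} hyq, ?_⟩
    rw [← hq, ← Walk.length_map (Embedding.induce {w | w ≠ y}).toHom, Walk.map_induce]
    rfl
  apply le_antisymm
  · exact hq' ▸ dist_le q'
  · obtain ⟨p, hp⟩ := q'.reachable.exists_walk_length_eq_dist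
    rw [← hp, ← Walk.length_map (Embedding.induce {w | w ≠ y}).toHom p]
    exact dist_le _

/-- If `u` were closer to `y` than to `x`, the unique path from `x` to `u` would start with the edge
`xy`. -/
lemma dist_eq_add_of_reachable_induce (hT : T.IsTree) (hxy : T.Adj x y) {u : {w | w ≠ y}}
    (hu : (T.induce {w | w ≠ y}).Reachable ⟨x, hxy.ne⟩ u) :
    T.dist y u = T.dist y x + T.dist x u := by
  obtain ⟨q, hq⟩ := hu.exists_isPath
  rcases dist_eq_dist_add_one_or hT hxy u with hyu | hyu
  · obtain ⟨p, hp⟩ := hT.connected.exists_walk_length_eq_dist y u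
    have hcons : (Walk.cons hxy p).IsPath := Walk.isPath_of_length_eq_dist _ (by simp [hp, hyu])
    have hmap : (q.map (Embedding.induce {w | w ≠ y}).toHom).IsPath :=
      hq.map Subtype.val_injective
    have hmem : y ∈ (q.map (Embedding.induce {w | w ≠ y}).toHom).support := by
      rw [(hT.existsUnique_path x u).unique hmap hcons]
      simp
    rw [Walk.support_map, List.mem_map] at hmem
    obtain ⟨w, -, hw⟩ := hmem
    exact absurd hw w.2
  · rw [hyu, dist_eq_one_iff_adj.2 hxy.symm, add_comm]

lemma iSup_dist_induce_eq_treeHeight [Finite V] (hT : T.IsTree) (hxy : T.Adj x y) :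
    ⨆ u : {w // w ≠ y}, (T.induce {w | w ≠ y}).dist ⟨x, hxy.ne⟩ u = treeHeight T y x := by
  apply le_antisymm
  · refine ciSup_le' fun u => ?_
    by_cases hu : (T.induce {w | w ≠ y}).Reachable ⟨x, hxy.ne⟩ u
    · have hd := dist_eq_add_of_reachable_induce hT hxy hu
      exact (dist_induce_eq_of_dist_eq_add hT.connected hxy hd).trans_le (dist_le_treeHeight hd)
    · simp [dist_eq_zero_of_not_reachable hu]
  · obtain ⟨u, hu, hmax⟩ := exists_dist_eq_treeHeight T y x
    have huy : u ≠ y := by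
      rintro rfl
      have := hT.connected.pos_dist_of_ne hxy.ne'
      rw [dist_self] at hu
      lia
    rw [← hmax, ← dist_induce_eq_of_dist_eq_add hT.connected hxy (u := ⟨u, huy⟩) hu]
    exact Finite.le_ciSup (fun u : {w // w ≠ y} => (T.induce {w | w ≠ y}).dist ⟨x, hxy.ne⟩ u) _

theorem IsRootedBy.subdivision_treeHeight [Finite V] [DecidableEq V] {p : V → V}
    {T' : SimpleGraph (Option V)} (H : IsRootedBy T x p (treeHeight T x)) (hT : T.IsTree)
    (hxy : T.Adj x y) (hT' : IsEdgeSubdivision T x y T')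
    (hle : treeHeight T y x ≤ treeHeight T x y) :
    IsRootedBy T' none (subdivisionParent p x y)
      (subdivisionHeight (treeHeight T x) x (treeHeight T y x)) := by
  have hyx1 := dist_eq_one_iff_adj.2 hxy.symm
  refine H.subdivision hxy hT' ?_ hle (fun c hcy hxc => ?_) fun hpos => ?_
  · rw [treeHeight_self_eq_max hT hxy, max_eq_left (by lia)]
  · rw [treeHeight_eq_of_adj_adj hT hxy hxc hcy]
    exact treeHeight_lt_of_adj hT.connected hxc
      (by rw [dist_eq_two_of_adj_adj hT hxy hxc hcy, hyx1])
  · obtain ⟨c, hxc, hd, hc⟩ := exists_adj_treeHeight_add_one_eq hT.connected hpos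
    have hcy : c ≠ y := by
      rintro rfl
      simp at hd
    exact ⟨c, hcy, hxc, by rwa [treeHeight_eq_of_adj_adj hT hxy hxc hcy]⟩

lemma treeHeight_le_of_eccG_le {V : Type} [Finite V] {T : SimpleGraph V} {x y : V}
    (hT : T.IsTree) (hxy : T.Adj x y) (hecc : eccG T y ≤ eccG T x) :
    treeHeight T y x ≤ treeHeight T x y := by
  rw [eccG, eccG, ← treeHeight_self, ← treeHeight_self, treeHeight_self_eq_max hT hxy,
    treeHeight_self_eq_max hT hxy.symm] at hecc
  lia

end Edge

theorem tree_subdivision_pebbling_general {V : Type} [Finite V] {T : SimpleGraph V}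
    (hT : T.IsTree) {x y : V} (hxy : T.Adj x y) (hecc : eccG T y ≤ eccG T x)
    {T' : SimpleGraph (Option V)} (hT' : IsEdgeSubdivision T x y T') {t : ℕ} (ht : 1 ≤ t) :
    piT T' none t =
      piT T x t +
        2 ^ (⨆ u : {w : V // w ≠ y}, (T.induce {w | w ≠ y}).dist ⟨x, hxy.ne⟩ u) := by
  classical
  have := Fintype.ofFinite V
  obtain ⟨p, hp⟩ := exists_isRootedBy_treeHeight hT x
  have hp' := hp.subdivision_treeHeight hT hxy hT' (treeHeight_le_of_eccG_le hT hxy hecc)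
  obtain ⟨q, rfl⟩ := Nat.exists_eq_add_of_le' ht
  rw [hp'.piT_succ, hp.piT_succ, pebbleWeight_subdivisionHeight,
    iSup_dist_induce_eq_treeHeight hT hxy, add_right_comm]

/-- subdividing a non-pendant edge `e = xy` (with `ecc(x) ≥ ecc(y)`)
of a tree `T` by a new vertex `r` gives `π_t(T',r) = π_t(T,x) + 2^a`, where `a` is
the eccentricity of `x` in the component of `T − y` containing `x`.
The subdivided tree `T'` lives on `Option V`, with `none` playing the role of the
new vertex `r`. -/
theorem tree_subdivision_pebbling {V : Type} [Fintype V] [DecidableEq V]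
    (T : SimpleGraph V) [DecidableRel T.Adj] (hconn : T.Connected) (hac : T.IsAcyclic)
    (x y : V) (hadj : T.Adj x y)
    (hx : 2 ≤ T.degree x) (hy : 2 ≤ T.degree y)
    (hecc : eccG T y ≤ eccG T x)
    (T' : SimpleGraph (Option V))
    (hsub₁ : ∀ a b : V, T'.Adj (some a) (some b) ↔
      (T.Adj a b ∧ ¬(a = x ∧ b = y) ∧ ¬(a = y ∧ b = x)))
    (hsub₂ : ∀ a : V, T'.Adj none (some a) ↔ (a = x ∨ a = y))
    (t : ℕ) (ht : 1 ≤ t) :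
    piT T' none t =
      piT T x t +
        2 ^ (⨆ u : {w : V // w ≠ y},
          (T.induce {w | w ≠ y}).dist ⟨x, (T.ne_of_adj hadj)⟩ u) :=
  tree_subdivision_pebbling_general ⟨hconn, hac⟩ hadj hecc ⟨hsub₁, hsub₂⟩ ht
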